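/- Let X be a real Banach space and B₁, B₂ ⊂ X nonempty bounded subsets. Then the Minkowski sum B₁ + B₂ is SCD if and only if there exists a countable family (x_n*, ε_n) of pairs of nonzero continuous linear functionals on X and positive reals such that for every nonzero continuous linear functional x* on X and every ε > 0 there is m ∈ ℕ with S(B₁, x_m*, ε_m) ⊂ S(B₁, x*, ε) and S(B₂, x_m*, ε_m) ⊂ S(B₂, x*, ε). -/

import Mathlib

open Bornology Set Pointwise

variable {X : Type*} [NormedAddCommGroup X] [NormedSpace ℝ X]

/-- The sliceSet of `A` given by the functional `f` and `ε > 0`. -/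
noncomputable def sliceSet (A : Set X) (f : X →L[ℝ] ℝ) (ε : ℝ) : Set X :=
  {x ∈ A | sSup (f '' A) - ε < f x}

/-- `S` is a sliceSet of `A`: a nonempty set of the form `sliceSet A f ε` with `f ≠ 0`, `ε > 0`. -/
def IsSlice (A S : Set X) : Prop :=
  S.Nonempty ∧ ∃ f : X →L[ℝ] ℝ, f ≠ 0 ∧ ∃ ε : ℝ, 0 < ε ∧ S = sliceSet A f ε

/-- A sequence of subsets of `A` is determining if every set `B` meeting all of them
has `A` inside the closed convex hull of `B`. -/
def Determining (A : Set X) (V : ℕ → Set X) : Prop :=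
  ∀ B : Set X, (∀ n, (B ∩ V n).Nonempty) → A ⊆ closure (convexHull ℝ B)

/-- A bounded set is slicely countably determined if it has a determining sequence of slices. -/
def IsSCD (A : Set X) : Prop :=
  ∃ V : ℕ → Set X, (∀ n, IsSlice A (V n)) ∧ Determining A V

/-- The Daugavet property: every rank-one operator `x ↦ f x • y` satisfies the
Daugavet equation `‖Id + T‖ = 1 + ‖T‖`. -/
def DaugavetProperty (X : Type*) [NormedAddCommGroup X] [NormedSpace ℝ X] : Prop :=
  ∀ (f : X →L[ℝ] ℝ) (y : X),
    ‖ContinuousLinearMap.id ℝ X + f.smulRight y‖ = 1 + ‖f.smulRight y‖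

/-!
By Hahn–Banach, subsets `V n` of `A` determine `A` exactly when every slice of `A` contains one of
them. For `A = B₁ + B₂` it remains to compare slices of the sum with slices of the summands. Since
`sup f(B₁ + B₂) = sup f(B₁) + sup f(B₂)`, the defect `sup f - f` is additive and nonnegative on each
summand, so
`S(B₁, f, ε/2) + S(B₂, f, ε/2) ⊆ S(B₁ + B₂, f, ε) ⊆ S(B₁, f, ε) + S(B₂, f, ε)`.
-/

theorem bddAbove_image_of_isBounded {A : Set X} (hA : IsBounded A) (f : X →L[ℝ] ℝ) :
    BddAbove (f '' A) :=
  (f.lipschitz.isBounded_image hA).bddAbove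

section Slices

variable {A B : Set X} {f g : X →L[ℝ] ℝ} {ε δ : ℝ} {x y : X}

theorem sliceSet_subset : sliceSet A f ε ⊆ A :=
  sep_subset _ _

theorem sliceSet_nonempty (hA : A.Nonempty) (f : X →L[ℝ] ℝ) (hε : 0 < ε) :
    (sliceSet A f ε).Nonempty := by
  obtain ⟨_, ⟨x, hxA, rfl⟩, hx⟩ := exists_lt_of_lt_csSup (hA.image f) (sub_lt_self _ hε)
  exact ⟨x, hxA, hx⟩

theorem sSup_image_add (hA : A.Nonempty) (hAf : BddAbove (f '' A)) (hB : B.Nonempty)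
    (hBf : BddAbove (f '' B)) : sSup (f '' (A + B)) = sSup (f '' A) + sSup (f '' B) := by
  rw [image_add, csSup_add (hA.image f) hAf (hB.image f) hBf]

theorem sliceSet_add_sliceSet_subset (hAf : BddAbove (f '' A)) (hBf : BddAbove (f '' B)) :
    sliceSet A f ε + sliceSet B f δ ⊆ sliceSet (A + B) f (ε + δ) := by
  rintro _ ⟨x, ⟨hxA, hx⟩, y, ⟨hyB, hy⟩, rfl⟩
  refine ⟨add_mem_add hxA hyB, ?_⟩
  rw [sSup_image_add ⟨x, hxA⟩ hAf ⟨y, hyB⟩ hBf, map_add]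
  linarith

theorem sliceSet_half_add_sliceSet_half_subset (hAf : BddAbove (f '' A))
    (hBf : BddAbove (f '' B)) :
    sliceSet A f (ε / 2) + sliceSet B f (ε / 2) ⊆ sliceSet (A + B) f ε := by
  simpa only [add_halves] using
    sliceSet_add_sliceSet_subset (ε := ε / 2) (δ := ε / 2) hAf hBf

theorem left_mem_sliceSet_of_add_mem (hAf : BddAbove (f '' A)) (hBf : BddAbove (f '' B))
    (hxA : x ∈ A) (hyB : y ∈ B) (hxy : x + y ∈ sliceSet (A + B) f ε) : x ∈ sliceSet A f ε := by
  refine ⟨hxA, ?_⟩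
  have hfy : f y ≤ sSup (f '' B) := le_csSup hBf (mem_image_of_mem f hyB)
  have hfxy := hxy.2
  rw [sSup_image_add ⟨x, hxA⟩ hAf ⟨y, hyB⟩ hBf, map_add] at hfxy
  linarith

theorem sliceSet_add_subset (hAf : BddAbove (f '' A)) (hBf : BddAbove (f '' B)) :
    sliceSet (A + B) f ε ⊆ sliceSet A f ε + sliceSet B f ε := by
  intro z hz
  obtain ⟨x, hxA, y, hyB, rfl⟩ := sliceSet_subset hz
  refine add_mem_add (left_mem_sliceSet_of_add_mem hAf hBf hxA hyB hz)
    (left_mem_sliceSet_of_add_mem hBf hAf hyB hxA ?_)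
  rwa [add_comm y, add_comm B]

theorem sliceSet_half_subset_of_sliceSet_add_subset (hA : IsBounded A) (hB : B.Nonempty)
    (hBb : IsBounded B) (hε : 0 < ε) (h : sliceSet (A + B) f ε ⊆ sliceSet (A + B) g δ) :
    sliceSet A f (ε / 2) ⊆ sliceSet A g δ := by
  intro x hx
  obtain ⟨y, hy⟩ := sliceSet_nonempty hB f (half_pos hε)
  have hxy : x + y ∈ sliceSet (A + B) f ε :=
    sliceSet_half_add_sliceSet_half_subset (bddAbove_image_of_isBounded hA f)
      (bddAbove_image_of_isBounded hBb f) (add_mem_add hx hy)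
  exact left_mem_sliceSet_of_add_mem (bddAbove_image_of_isBounded hA g)
    (bddAbove_image_of_isBounded hBb g) (sliceSet_subset hx) (sliceSet_subset hy) (h hxy)

theorem sliceSet_add_subset_of_sliceSet_subset_half (hA : IsBounded A) (hB : IsBounded B)
    (h₁ : sliceSet A f ε ⊆ sliceSet A g (δ / 2)) (h₂ : sliceSet B f ε ⊆ sliceSet B g (δ / 2)) :
    sliceSet (A + B) f ε ⊆ sliceSet (A + B) g δ :=
  calc
    sliceSet (A + B) f ε ⊆ sliceSet A f ε + sliceSet B f ε :=
      sliceSet_add_subset (bddAbove_image_of_isBounded hA f) (bddAbove_image_of_isBounded hB f)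
    _ ⊆ sliceSet A g (δ / 2) + sliceSet B g (δ / 2) := add_subset_add h₁ h₂
    _ ⊆ sliceSet (A + B) g δ := sliceSet_half_add_sliceSet_half_subset
      (bddAbove_image_of_isBounded hA g) (bddAbove_image_of_isBounded hB g)

end Slices

section Determining

variable {A B : Set X} {V : ℕ → Set X}

theorem closure_convexHull_subset_halfSpace {g : X →L[ℝ] ℝ} {c : ℝ} (hB : ∀ x ∈ B, g x ≤ c) :
    closure (convexHull ℝ B) ⊆ {x | g x ≤ c} :=
  closure_minimal (convexHull_min hB (convex_halfSpace_le g.toLinearMap.isLinear c))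
    (isClosed_le g.continuous continuous_const)

theorem exists_ne_zero_separating_of_notMem_closure_convexHull {a : X} (hB : B.Nonempty)
    (ha : a ∉ closure (convexHull ℝ B)) :
    ∃ g : X →L[ℝ] ℝ, g ≠ 0 ∧ ∃ u, (∀ b ∈ B, g b < u) ∧ u < g a := by
  obtain ⟨g, u, hgu, hua⟩ := geometric_hahn_banach_closed_point
    (convex_convexHull ℝ B).closure isClosed_closure ha
  have hgB : ∀ b ∈ B, g b < u := fun b hb => hgu b (subset_closure (subset_convexHull ℝ B hb))
  refine ⟨g, ?_, u, hgB, hua⟩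
  rintro rfl
  obtain ⟨b, hb⟩ := hB
  exact (hgB b hb).not_gt hua

theorem Determining.exists_subset_sliceSet (hV : Determining A V) (hA : A.Nonempty)
    (hVA : ∀ n, V n ⊆ A) (g : X →L[ℝ] ℝ) {δ : ℝ} (hδ : 0 < δ) :
    ∃ m, V m ⊆ sliceSet A g δ := by
  by_contra! hcon
  choose b hbV hbg using fun m => not_subset.1 (hcon m)
  have hA_hull : A ⊆ closure (convexHull ℝ (range b)) :=
    hV (range b) fun n => ⟨b n, mem_range_self n, hbV n⟩
  have hb_le : ∀ x ∈ range b, g x ≤ sSup (g '' A) - δ := by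
    rintro _ ⟨n, rfl⟩
    exact not_lt.1 fun hlt => hbg n ⟨hVA n (hbV n), hlt⟩
  obtain ⟨x, hxA, hx⟩ := sliceSet_nonempty hA g hδ
  exact hx.not_ge (closure_convexHull_subset_halfSpace hb_le (hA_hull hxA))

theorem determining_of_exists_subset_sliceSet (hA : IsBounded A)
    (hV : ∀ g : X →L[ℝ] ℝ, g ≠ 0 → ∀ δ : ℝ, 0 < δ → ∃ m, V m ⊆ sliceSet A g δ) :
    Determining A V := by
  intro B hB a haA
  by_contra ha
  obtain ⟨g, hg, u, hgB, hua⟩ :=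
    exists_ne_zero_separating_of_notMem_closure_convexHull ((hB 0).mono inter_subset_left) ha
  have hu_lt : u < sSup (g '' A) :=
    hua.trans_le (le_csSup (bddAbove_image_of_isBounded hA g) (mem_image_of_mem g haA))
  obtain ⟨m, hm⟩ := hV g hg (sSup (g '' A) - u) (sub_pos.2 hu_lt)
  obtain ⟨b, hbB, hbV⟩ := hB m
  have hub : u < g b := by simpa only [sub_sub_cancel] using (hm hbV).2
  exact hub.not_gt (hgB b hbB)

theorem isSCD_iff_exists_sliceSet_subset (hA : A.Nonempty) (hAb : IsBounded A) :
    IsSCD A ↔ ∃ (f : ℕ → X →L[ℝ] ℝ) (ε : ℕ → ℝ), (∀ n, f n ≠ 0) ∧ (∀ n, 0 < ε n) ∧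
      ∀ g : X →L[ℝ] ℝ, g ≠ 0 → ∀ δ : ℝ, 0 < δ → ∃ m,
        sliceSet A (f m) (ε m) ⊆ sliceSet A g δ := by
  constructor
  · rintro ⟨V, hV, hdet⟩
    choose _ f hf ε hε hVf using hV
    obtain rfl : V = fun n => sliceSet A (f n) (ε n) := funext hVf
    exact ⟨f, ε, hf, hε, fun g _ δ hδ =>
      hdet.exists_subset_sliceSet hA (fun _ => sliceSet_subset) g hδ⟩
  · rintro ⟨f, ε, hf, hε, hfε⟩
    exact ⟨fun n => sliceSet A (f n) (ε n),
      fun n => ⟨sliceSet_nonempty hA (f n) (hε n), f n, hf n, ε n, hε n, rfl⟩,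
      determining_of_exists_subset_sliceSet hAb hfε⟩

end Determining

theorem sum_isSCD_iff_general {B₁ B₂ : Set X} (h₁ : B₁.Nonempty) (h₁b : IsBounded B₁)
    (h₂ : B₂.Nonempty) (h₂b : IsBounded B₂) :
    IsSCD (B₁ + B₂) ↔
      ∃ (f : ℕ → X →L[ℝ] ℝ) (ε : ℕ → ℝ), (∀ n, f n ≠ 0) ∧ (∀ n, 0 < ε n) ∧
        ∀ (g : X →L[ℝ] ℝ), g ≠ 0 → ∀ δ : ℝ, 0 < δ → ∃ m,
          sliceSet B₁ (f m) (ε m) ⊆ sliceSet B₁ g δ ∧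
          sliceSet B₂ (f m) (ε m) ⊆ sliceSet B₂ g δ := by
  rw [isSCD_iff_exists_sliceSet_subset (h₁.add h₂) (h₁b.add h₂b)]
  constructor
  · rintro ⟨f, ε, hf, hε, hfε⟩
    refine ⟨f, fun n => ε n / 2, hf, fun n => half_pos (hε n), fun g hg δ hδ => ?_⟩
    obtain ⟨m, hm⟩ := hfε g hg δ hδ
    refine ⟨m, sliceSet_half_subset_of_sliceSet_add_subset h₁b h₂ h₂b (hε m) hm,
      sliceSet_half_subset_of_sliceSet_add_subset h₂b h₁ h₁b (hε m) ?_⟩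
    rwa [add_comm B₂]
  · rintro ⟨f, ε, hf, hε, hfε⟩
    refine ⟨f, ε, hf, hε, fun g hg δ hδ => ?_⟩
    obtain ⟨m, hm₁, hm₂⟩ := hfε g hg (δ / 2) (half_pos hδ)
    exact ⟨m, sliceSet_add_subset_of_sliceSet_subset_half h₁b h₂b hm₁ hm₂⟩

theorem sum_isSCD_iff
    {X : Type*} [NormedAddCommGroup X] [NormedSpace ℝ X] [CompleteSpace X]
    (B₁ B₂ : Set X) (h₁ : B₁.Nonempty) (h₁b : IsBounded B₁)
    (h₂ : B₂.Nonempty) (h₂b : IsBounded B₂) :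
    IsSCD (B₁ + B₂) ↔
      ∃ (f : ℕ → X →L[ℝ] ℝ) (ε : ℕ → ℝ), (∀ n, f n ≠ 0) ∧ (∀ n, 0 < ε n) ∧
        ∀ (g : X →L[ℝ] ℝ), g ≠ 0 → ∀ δ : ℝ, 0 < δ → ∃ m,
          sliceSet B₁ (f m) (ε m) ⊆ sliceSet B₁ g δ ∧
          sliceSet B₂ (f m) (ε m) ⊆ sliceSet B₂ g δ :=
  sum_isSCD_iff_general h₁ h₁b h₂ h₂b
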